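/- Torsion criterion at a 1-cut: if v is a vertex of Γ and e₁, e₂ are edges lying in distinct connected components of the vertex explosion Γ_v, then the (e₁ − e₂)-torsion submodule of H₁(B(Γ)) is contained in the image of H₁(B(Γ_v)) → H₁(B(Γ)). -/

import Mathlib

/-!
A combinatorial model of the Świątkowski chain complex of a finite graph
(finite CW-complex of dimension ≤ 1), computing the homology of its unordered
configuration spaces (An–Drummond-Cole–Knudsen).

A graph is given by a vertex type `V`, an edge type `E` and an endpoint map
`ends : E → V × V` (self-loops and multiple edges are allowed).  A half-edge is
a pair `(e, b) : E × Bool`, whose vertex is the corresponding endpoint of `e`.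

We work with the ℤ-basis of the Świątkowski complex consisting of a monomial
`m : E →₀ ℕ` in the edges together with a choice, for each vertex `v`, of a
local generator from `S(v) = ℤ⟨∅, v, h ∈ H(v)⟩`: a half-edge at `v`
(`Sum.inl`), the vertex itself (`Sum.inr true`), or `∅` (`Sum.inr false`).
The differential is the ℤ[E]-linear derivation with `∂h = e(h) - v(h)`,
with Koszul signs determined by a fixed enumeration of the vertices.
`degB` is the homological degree (number of half-edge factors) and `wtB` is the
weight (number of particles).  `hasDW i k` is the subgroup of chains of pure
degree `i` and weight `k`; `cyc i k` the corresponding cycles, `bdry i k` the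
boundaries of degree/weight `(i+1, k)` chains, and `Hgr i k` their quotient,
which is `H_i(B_k Γ)`.  `stab e` is edge stabilization (multiplication by `e`).
-/

namespace Swiatkowski

variable {V E : Type} [Fintype V] [Fintype E] [DecidableEq V] [DecidableEq E]

/-- The vertex of a half-edge. -/
def vtx (ends : E → V × V) (h : E × Bool) : V :=
  cond h.2 (ends h.1).2 (ends h.1).1

/-- The local generators at a vertex `v`: a half-edge at `v`, or the vertex
generator (`true`), or `∅` (`false`). -/
abbrev VGen (ends : E → V × V) (v : V) : Type :=
  {h : E × Bool // vtx ends h = v} ⊕ Bool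

/-- A choice of local generator at every vertex. -/
abbrev States (ends : E → V × V) : Type := ∀ v : V, VGen ends v

/-- The ℤ-basis of the Świątkowski complex: an edge monomial together with a
state. -/
abbrev Bas (ends : E → V × V) : Type := (E →₀ ℕ) × States ends

/-- The underlying ℤ-module of the Świątkowski complex. -/
abbrev SC (ends : E → V × V) : Type := Bas ends →₀ ℤ

variable (ends : E → V × V)

/-- An enumeration of the vertices, used for Koszul signs. -/
noncomputable def idx : V → ℕ := fun v => ((Fintype.equivFin V) v : ℕ)

/-- The Koszul sign of the half-edge slot at `v` inside the state `f`. -/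
noncomputable def sgn (f : States ends) (v : V) : ℤ :=
  (-1) ^ (Finset.univ.filter fun w => idx w < idx v ∧ (f w).isLeft = true).card

/-- Homological degree of a basis element: its number of half-edge factors. -/
def degB (b : Bas ends) : ℕ :=
  (Finset.univ.filter fun v => (b.2 v).isLeft = true).card

/-- Weight (particle number) of a basis element. -/
def wtB (b : Bas ends) : ℕ :=
  (b.1.sum fun _ n => n) + ∑ v : V, Sum.elim (fun _ => 1) (fun t => cond t 1 0) (b.2 v)

/-- Value of the differential on a basis element: the signed sum over the
half-edge slots `h` of the substitutions `h ↦ e(h)` and `h ↦ v(h)`. -/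
noncomputable def Db (b : Bas ends) : SC ends :=
  ∑ v : V,
    (match b.2 v with
      | Sum.inl h =>
          sgn ends b.2 v •
            (Finsupp.single (b.1 + Finsupp.single h.1.1 1,
                Function.update b.2 v (Sum.inr false)) (1 : ℤ)
              - Finsupp.single (b.1, Function.update b.2 v (Sum.inr true)) (1 : ℤ))
      | Sum.inr _ => 0)

/-- The differential of the Świątkowski complex. -/
noncomputable def D : SC ends →ₗ[ℤ] SC ends :=
  Finsupp.linearCombination ℤ (Db ends)

/-- The subgroup of chains of pure homological degree `i` and weight `k`. -/
noncomputable def hasDW (i k : ℕ) : Submodule ℤ (SC ends) where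
  carrier := {x | ∀ b ∈ x.support, degB ends b = i ∧ wtB ends b = k}
  add_mem' := by
    intro x y hx hy b hb
    rcases Finset.mem_union.mp (Finsupp.support_add hb) with h | h
    exacts [hx b h, hy b h]
  zero_mem' := by simp
  smul_mem' := by
    intro c x hx b hb
    exact hx b (Finsupp.support_smul hb)

/-- Cycles of degree `i` and weight `k`. -/
noncomputable def cyc (i k : ℕ) : Submodule ℤ (SC ends) := LinearMap.ker (D ends) ⊓ hasDW ends i k

/-- Boundaries of degree `i` and weight `k` chains. -/
noncomputable def bdry (i k : ℕ) : Submodule ℤ (SC ends) := Submodule.map (D ends) (hasDW ends (i + 1) k)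

/-- The homology `H_i(B_k Γ)` of the weight-`k` Świątkowski complex. -/
noncomputable def Hgr (i k : ℕ) :=
  cyc ends i k ⧸ Submodule.comap (cyc ends i k).subtype (bdry ends i k)

noncomputable instance (i k : ℕ) : AddCommGroup (Hgr ends i k) :=
  inferInstanceAs (AddCommGroup
    (cyc ends i k ⧸ Submodule.comap (cyc ends i k).subtype (bdry ends i k)))

/-- Edge stabilization: multiplication by the edge `e`. -/
noncomputable def stab (e : E) : SC ends →ₗ[ℤ] SC ends :=
  Finsupp.lmapDomain ℤ ℤ fun b => (b.1 + Finsupp.single e 1, b.2)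

end Swiatkowski

namespace Swiatkowski

section Explosion

variable {V E : Type} [Fintype V] [Fintype E] [DecidableEq V] [DecidableEq E]
variable (ends : E → V × V) (v : V)

/-- The vertices of the vertex explosion `Γ_v`: the old vertices other than
`v`, together with one new (univalent) vertex for each half-edge at `v`. -/
abbrev ExVert : Type := {w : V // w ≠ v} ⊕ {h : E × Bool // vtx ends h = v}

/-- The endpoint of an edge of `Γ_v` on the side `b`: the old endpoint if it
was not `v`, and the new leaf corresponding to the half-edge otherwise. -/
def exSide (e : E) (b : Bool) : ExVert ends v :=
  if p : vtx ends (e, b) = v then Sum.inr ⟨(e, b), p⟩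
  else Sum.inl ⟨vtx ends (e, b), p⟩

/-- The endpoint map of the vertex explosion `Γ_v`. -/
def exEnds : E → ExVert ends v × ExVert ends v :=
  fun e => (exSide ends v e false, exSide ends v e true)

/-- Whether some new leaf of `Γ_v` carries a half-edge generator. -/
def leafHasHalf (f : States (exEnds ends v)) : Prop :=
  ∃ h : {h : E × Bool // vtx ends h = v}, (f (Sum.inr h)).isLeft = true

instance (f : States (exEnds ends v)) : Decidable (leafHasHalf ends v f) := by
  unfold leafHasHalf; infer_instance

/-- The edge monomial accounting for particles sitting on new leaves of
`Γ_v`: under the inclusion `Γ_v ⊆ Γ` such a particle becomes a particle on the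
corresponding edge. -/
noncomputable def extraMon (f : States (exEnds ends v)) : E →₀ ℕ :=
  ∑ h : {h : E × Bool // vtx ends h = v},
    (match f (Sum.inr h) with
      | Sum.inr true => Finsupp.single h.1.1 1
      | _ => 0)

/-- Restriction of a state of `Γ_v` to a state of `Γ` (the slot of `v` is set
to `∅`). -/
def resState (f : States (exEnds ends v)) : States ends := fun w =>
  if q : w = v then Sum.inr false
  else
    match f (Sum.inl ⟨w, q⟩) with
    | Sum.inl h =>
        if p : vtx ends h.1 = w then Sum.inl ⟨h.1, p⟩ else Sum.inr false
    | Sum.inr t => Sum.inr t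

/-- The chain map underlying the map induced on configuration spaces by the
inclusion `Γ_v ⊆ Γ` (as a subgraph of a subdivision), on basis elements. -/
noncomputable def inclB (b : Bas (exEnds ends v)) : SC ends :=
  if leafHasHalf ends v b.2 then 0
  else Finsupp.single (b.1 + extraMon ends v b.2, resState ends v b.2) (1 : ℤ)

/-- The chain map induced by the inclusion `Γ_v ⊆ Γ`. -/
noncomputable def incl : SC (exEnds ends v) →ₗ[ℤ] SC ends :=
  Finsupp.linearCombination ℤ (inclB ends v)

variable (h₀ : E × Bool)

/-- The index type of the direct sum `⊕_{h₀ ≠ h ∈ H(v)}`: the half-edges at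
`v` other than the privileged one `h₀`. -/
abbrev OtherHalf : Type := {h : E × Bool // vtx ends h = v ∧ h ≠ h₀}

/-- Transfer of a state of `Γ` (forgetting the generator at `v`) to a state of
`Γ_v`, with `∅` on all the new leaves. -/
def downState (f : States ends) : States (exEnds ends v) := fun w' =>
  match w' with
  | Sum.inl w =>
      (match f w.1 with
        | Sum.inl h =>
            if p : vtx (exEnds ends v) h.1 = Sum.inl w then Sum.inl ⟨h.1, p⟩
            else Sum.inr false
        | Sum.inr t => Sum.inr t)
  | Sum.inr _ => Sum.inr false

/-- The chain map underlying `ψ`, on basis elements: in the reduced basis of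
the Świątkowski complex at `v` privileging `h₀`, it records the coefficient of
`h − h₀` for each half-edge `h ≠ h₀` at `v`. -/
noncomputable def psiB (b : Bas ends) : OtherHalf ends v h₀ → SC (exEnds ends v) :=
  fun h =>
    if b.2 v = Sum.inl ⟨h.1, h.2.1⟩ then
      sgn ends b.2 v • Finsupp.single (b.1, downState ends v b.2) (1 : ℤ)
    else 0

/-- The chain map inducing the map
`ψ : H_i(B_k(Γ)) → ⊕_{h₀ ≠ h ∈ H(v)} H_{i−1}(B_{k−1}(Γ_v))`,
sending `b + Σ_h (h − h₀)·a_h` to `(a_h)_h`. -/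
noncomputable def psi :
    SC ends →ₗ[ℤ] (OtherHalf ends v h₀ → SC (exEnds ends v)) :=
  Finsupp.linearCombination ℤ (psiB ends v h₀)

/-- The connecting-type map `δ`, acting on the summand indexed by `h` as
multiplication by the ring element `e(h) − e(h₀)`. -/
noncomputable def delta :
    (OtherHalf ends v h₀ → SC (exEnds ends v)) →ₗ[ℤ] SC (exEnds ends v) :=
  ∑ h : OtherHalf ends v h₀,
    (stab (exEnds ends v) h.1.1 - stab (exEnds ends v) h₀.1) ∘ₗ LinearMap.proj h

end Explosion

end Swiatkowski

open Swiatkowski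

/-!
Give the edges and vertices of the component of `e₁` in `Γ_v` weight `1` and the others weight `0`,
and let `θ` be the derivation of the Świątkowski complex of `Γ` removing one particle according to
these weights. They are locally constant away from `v`, so `θ` commutes with the part `∂'` of the
differential `∂ = ∂_v + ∂'` supported away from `v`, while `[θ, e₁ - e₂] = 1`. Moreover `θ` is
locally nilpotent, since it lowers the weight, and `θⁿ` is divisible by `n!`. Hence, if
`(e₁ - e₂) x = ∂' w`, the divided powers of `θ` give an alternating sum exhibiting `x` as a
`∂'`-boundary: multiplication by `e₁ - e₂` is injective on the homology of `∂'`.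

Projecting to the chains with a half-edge at `v` kills the image of `∂_v` and commutes with `∂'`.
By the injectivity, a cycle `x` with `(e₁ - e₂) x` a boundary is therefore homologous to a cycle
with no half-edge at `v`. A half-edge at `v` then moves the particle at `v`, if any, onto its edge,
which leaves a cycle with `∅` at `v`, that is, a cycle of `Γ_v`.
-/

namespace Swiatkowski

open Finset
open scoped Nat

section DividedPowers

variable {R : Type*} [Ring R]

/-- The element `θ` admits divided powers: each `θ ^ n` is divisible by `n!`. Divisibility is all
that is recorded, since the modules it is used on have no torsion. -/
def HasDividedPowers (θ : R) : Prop :=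
  ∀ n : ℕ, (n ! : R) ∣ θ ^ n

lemma HasDividedPowers.zero : HasDividedPowers (0 : R) := by
  rintro (_ | n) <;> simp

lemma HasDividedPowers.of_mul_self_eq_zero {θ : R} (h : θ * θ = 0) : HasDividedPowers θ := by
  rintro (_ | _ | n)
  · simp
  · simp
  · simp [pow_succ', ← mul_assoc, h]

lemma HasDividedPowers.zsmul {θ : R} (h : HasDividedPowers θ) (a : ℤ) :
    HasDividedPowers (a • θ) := by
  intro n
  obtain ⟨ρ, hρ⟩ := h n
  exact ⟨a ^ n • ρ, by rw [smul_pow, hρ, mul_smul_comm]⟩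

lemma HasDividedPowers.add {θ η : R} (hθ : HasDividedPowers θ) (hη : HasDividedPowers η)
    (hcomm : Commute θ η) : HasDividedPowers (θ + η) := by
  intro n
  rw [hcomm.add_pow']
  refine Finset.dvd_sum fun ⟨i, j⟩ hij => ?_
  obtain rfl : i + j = n := by simpa using hij
  obtain ⟨ρ, hρ⟩ := hθ i
  obtain ⟨τ, hτ⟩ := hη j
  refine ⟨ρ * τ, ?_⟩
  have hρ_comm : ρ * (j ! : R) = j ! * ρ := (Nat.cast_commute _ _).symm.eq
  calc (i + j).choose i • (θ ^ i * η ^ j)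
      = ((i + j).choose j * i ! * j ! : ℕ) * (ρ * τ) := by
        rw [hρ, hτ, nsmul_eq_mul, mul_assoc, ← mul_assoc ρ, hρ_comm, Nat.choose_symm_add]
        push_cast
        noncomm_ring
    _ = (i + j)! * (ρ * τ) := by rw [Nat.add_choose_mul_factorial_mul_factorial]

lemma HasDividedPowers.sum {ι : Type*} (s : Finset ι) (θ : ι → R)
    (hθ : ∀ i ∈ s, HasDividedPowers (θ i)) (hcomm : ∀ i j, Commute (θ i) (θ j)) :
    HasDividedPowers (∑ i ∈ s, θ i) := by
  classical
  induction s using Finset.induction_on with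
  | empty => simpa using HasDividedPowers.zero
  | insert i s hi ih =>
    rw [sum_insert hi]
    exact (hθ i (mem_insert_self i s)).add (ih fun j hj => hθ j (mem_insert_of_mem hj))
      (Commute.sum_right _ _ _ fun j _ => hcomm i j)

lemma pow_succ_mul_of_mul_eq_mul_add_one {θ a : R} (h : θ * a = a * θ + 1) (n : ℕ) :
    θ ^ (n + 1) * a = a * θ ^ (n + 1) + (n + 1) * θ ^ n := by
  induction n with
  | zero => simpa using h
  | succ n ih =>
    have hcomm : θ * ((n : R) + 1) = (n + 1) * θ := by
      rw [mul_add, add_mul, (Nat.cast_commute n θ).symm.eq, mul_one, one_mul]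
    calc θ ^ (n + 1 + 1) * a = θ * (θ ^ (n + 1) * a) := by rw [pow_succ' θ (n + 1), mul_assoc]
      _ = (θ * a) * θ ^ (n + 1) + (n + 1) * θ ^ (n + 1) := by
        rw [ih, mul_add, ← mul_assoc, ← mul_assoc, hcomm, mul_assoc ((n : R) + 1), ← pow_succ']
      _ = a * θ ^ (n + 1 + 1) + ((n + 1 : ℕ) + 1) * θ ^ (n + 1) := by
        rw [h, add_mul, mul_assoc, ← pow_succ' θ (n + 1)]
        push_cast
        noncomm_ring

lemma sum_mul_eq_mul_sum_add {ι : Type*} [Fintype ι] {x : ι → R} {a b : R} (i : ι)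
    (hi : x i * a = a * x i + b) (hne : ∀ j, j ≠ i → Commute (x j) a) :
    (∑ j, x j) * a = a * ∑ j, x j + b := by
  classical
  have hcomm : Commute (∑ j ∈ univ.erase i, x j) a :=
    Commute.sum_left _ _ _ fun j hj => hne j (ne_of_mem_erase hj)
  rw [← add_sum_erase _ _ (mem_univ i), add_mul, mul_add, hi, hcomm.eq]
  abel

lemma sum_mul_sum_self_eq_zero {ι : Type*} (s : Finset ι) (x : ι → R)
    (hsq : ∀ i, x i * x i = 0) (hanti : ∀ i j, i ≠ j → x i * x j = -(x j * x i)) :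
    (∑ i ∈ s, x i) * ∑ i ∈ s, x i = 0 := by
  classical
  induction s using Finset.induction_on with
  | empty => simp
  | insert i s hi ih =>
    have hcross : x i * ∑ j ∈ s, x j = -((∑ j ∈ s, x j) * x i) := by
      rw [mul_sum, sum_mul, ← sum_neg_distrib]
      exact sum_congr rfl fun j hj => hanti i j (ne_of_mem_of_not_mem hj hi).symm
    rw [sum_insert hi, add_mul, mul_add, mul_add, hsq, ih, hcross]
    abel

/-- Writing `xₙ = θⁿ x / n!` and `zₙ = θⁿ⁺¹ w / (n + 1)!`, the commutation rule turns `a x = δ w`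
into `a xₙ₊₁ + xₙ = δ zₙ`, and the alternating sum of these identities telescopes. -/
lemma HasDividedPowers.exists_eq_apply_sum {M : Type*} [AddCommGroup M] [IsAddTorsionFree M]
    {θ a δ : Module.End ℤ M} (hθ : HasDividedPowers θ) (hθa : θ * a = a * θ + 1) (hθδ : Commute θ δ)
    (haδ : Commute a δ) {x w : M} (hxw : a x = δ w) {N : ℕ} (hN : (θ ^ N) x = 0) :
    ∃ z : ℕ → M, (∀ n, (n + 1)! • z n = (θ ^ (n + 1)) w) ∧
      x = δ (∑ n ∈ range N, ((-a) ^ n) (z n)) := by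
  choose ρ hρ using hθ
  have hρ_apply (n : ℕ) (u : M) : n ! • ρ n u = (θ ^ n) u := by
    rw [hρ, Module.End.mul_apply, Module.End.natCast_apply]
  have recurrence (n : ℕ) : a (ρ (n + 1) x) + ρ n x = δ (ρ (n + 1) w) := by
    refine nsmul_right_injective (n + 1).factorial_ne_zero ?_
    calc (n + 1)! • (a (ρ (n + 1) x) + ρ n x)
        = a ((θ ^ (n + 1)) x) + (n + 1) • (θ ^ n) x := by
          rw [smul_add, ← map_nsmul, hρ_apply, Nat.factorial_succ, mul_smul, hρ_apply]
      _ = (θ ^ (n + 1)) (a x) := by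
          rw [← Module.End.mul_apply, ← Module.End.mul_apply,
            pow_succ_mul_of_mul_eq_mul_add_one hθa, LinearMap.add_apply, ← Nat.cast_succ,
            Module.End.mul_apply _ (θ ^ n), Module.End.natCast_apply]
      _ = (n + 1)! • δ (ρ (n + 1) w) := by
          rw [hxw, ← map_nsmul, hρ_apply, ← Module.End.mul_apply, ← Module.End.mul_apply,
            (hθδ.pow_left _).eq]
  have hρN : ρ N x = 0 := by
    refine nsmul_right_injective N.factorial_ne_zero ?_
    simp [hρ_apply, hN]
  have hρ0 : ρ 0 x = x := by simpa using hρ_apply 0 x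
  refine ⟨fun n => ρ (n + 1) w, fun n => hρ_apply _ w, ?_⟩
  have telescope := sum_range_sub' (fun n => ((-a) ^ n) (ρ n x)) N
  rw [hρN, map_zero, sub_zero, pow_zero, Module.End.one_apply, hρ0] at telescope
  rw [← telescope, map_sum]
  refine sum_congr rfl fun n _ => ?_
  rw [← Module.End.mul_apply δ, ← ((haδ.neg_left).pow_left n).eq, Module.End.mul_apply,
    ← recurrence, map_add, pow_succ, Module.End.mul_apply, LinearMap.neg_apply, map_neg]
  abel

end DividedPowers

section Free

variable {α : Type*} {M : Type*} [AddCommGroup M]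

lemma map_mem_of_mem_supported {s : Set α} {x : α →₀ ℤ} (hx : x ∈ Finsupp.supported ℤ ℤ s)
    (F : (α →₀ ℤ) →ₗ[ℤ] M) (N : Submodule ℤ M) (h : ∀ a ∈ s, F (Finsupp.single a 1) ∈ N) :
    F x ∈ N := by
  rw [Finsupp.supported_eq_span_single] at hx
  refine (Submodule.span_le (p := N.comap F)).2 ?_ hx
  rintro _ ⟨a, ha, rfl⟩
  exact h a ha

lemma map_eq_map_of_mem_supported {s : Set α} {x : α →₀ ℤ} (hx : x ∈ Finsupp.supported ℤ ℤ s)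
    {F G : (α →₀ ℤ) →ₗ[ℤ] M}
    (h : ∀ a ∈ s, F (Finsupp.single a 1) = G (Finsupp.single a 1)) : F x = G x := by
  have := map_mem_of_mem_supported hx (F - G) ⊥ fun a ha => by simp [h a ha]
  simpa [sub_eq_zero] using this

end Free

lemma prod_apply_update_mul {ι M : Type*} [Fintype ι] [DecidableEq ι] [CommMonoid M]
    {X : ι → Type*} (g : ∀ i, X i → M) (f : ∀ i, X i) (i : ι) (q : X i) :
    (∏ j, g j (Function.update f i q j)) * g i (f i) = (∏ j, g j (f j)) * g i q := by
  rw [← mul_prod_erase _ _ (mem_univ i), ← mul_prod_erase _ (fun j => g j (f j)) (mem_univ i),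
    Function.update_self, prod_congr rfl fun j hj => by
      rw [Function.update_of_ne (ne_of_mem_erase hj)]]
  exact mul_right_comm _ _ _ |>.trans (by ac_rfl)

lemma sum_apply_update_add {ι M : Type*} [Fintype ι] [DecidableEq ι] [AddCommMonoid M]
    {X : ι → Type*} (g : ∀ i, X i → M) (f : ∀ i, X i) (i : ι) (q : X i) :
    (∑ j, g j (Function.update f i q j)) + g i (f i) = (∑ j, g j (f j)) + g i q :=
  prod_apply_update_mul (M := Multiplicative M) g f i q

section Sign

variable {V E : Type} [Fintype V] (ends : E → V × V)

lemma idx_injective : Function.Injective (idx : V → ℕ) :=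
  Fin.val_injective.comp (Fintype.equivFin V).injective

lemma sgn_mul_self (f : States ends) (w : V) : sgn ends f w * sgn ends f w = 1 := by
  rw [sgn, ← mul_pow]
  simp

lemma sgn_eq_prod (f : States ends) (w : V) :
    sgn ends f w = ∏ u, if idx u < idx w ∧ (f u).isLeft = true then -1 else 1 := by
  rw [sgn, ← prod_const, prod_filter]

variable [DecidableEq V]

lemma sgn_update_of_isLeft_eq (f : States ends) {w : V} (q : VGen ends w) (w' : V)
    (h : (f w).isLeft = q.isLeft) : sgn ends (Function.update f w q) w' = sgn ends f w' := by
  have key := prod_apply_update_mul (ι := V) (X := VGen ends)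
    (fun u a => if idx u < idx w' ∧ a.isLeft = true then (-1 : ℤ) else 1) f w q
  rw [← sgn_eq_prod, ← sgn_eq_prod, h] at key
  refine mul_right_cancel₀ ?_ key
  split_ifs <;> decide

lemma sgn_update_of_not_lt (f : States ends) {w : V} (q : VGen ends w) {w' : V}
    (h : ¬ idx w < idx w') : sgn ends (Function.update f w q) w' = sgn ends f w' := by
  have key := prod_apply_update_mul (ι := V) (X := VGen ends)
    (fun u a => if idx u < idx w' ∧ a.isLeft = true then (-1 : ℤ) else 1) f w q
  simpa [← sgn_eq_prod, h] using key

lemma sgn_update_of_lt (f : States ends) {w : V} (q : VGen ends w) {w' : V}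
    (hlt : idx w < idx w') (h : (f w).isLeft ≠ q.isLeft) :
    sgn ends (Function.update f w q) w' = -sgn ends f w' := by
  have key := prod_apply_update_mul (ι := V) (X := VGen ends)
    (fun u a => if idx u < idx w' ∧ a.isLeft = true then (-1 : ℤ) else 1) f w q
  rw [← sgn_eq_prod, ← sgn_eq_prod] at key
  rcases hf : f w with a | a <;> rcases q with b | b <;> simp [hf, hlt] at h key <;> linarith

end Sign

section Stab

variable {V E : Type} (ends : E → V × V)

lemma chain_hom_ext {M : Type*} [AddCommGroup M] {F G : SC ends →ₗ[ℤ] M}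
    (h : ∀ m f, F (Finsupp.single (m, f) 1) = G (Finsupp.single (m, f) 1)) : F = G :=
  Finsupp.lhom_ext' fun ⟨m, f⟩ => LinearMap.ext_ring (h m f)

lemma stab_single (e : E) (m : E →₀ ℕ) (f : States ends) (a : ℤ) :
    stab ends e (Finsupp.single (m, f) a) = Finsupp.single (m + Finsupp.single e 1, f) a := by
  simp [stab]

lemma stab_commute_stab (e e' : E) :
    Commute (stab ends e : Module.End ℤ (SC ends)) (stab ends e') :=
  chain_hom_ext ends fun m f => by
    simp only [Module.End.mul_apply, stab_single, add_right_comm]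

end Stab

section Slot

variable {V E : Type} [Fintype V] [DecidableEq V] (ends : E → V × V)

/-- The Koszul sign picked up when the generator `p` in the slot at `w` is replaced by `q`: the
sign of the slot if exactly one of the two is a half-edge, and `1` otherwise. -/
noncomputable def slotSign (f : States ends) {w : V} (p q : VGen ends w) : ℤ :=
  if p.isLeft = q.isLeft then 1 else sgn ends f w

variable [DecidableEq E]

/-- The matrix unit at the vertex `w`: the operator replacing the generator `p` at `w` by `q`,
with Koszul sign, and killing the states with another generator at `w`. The differential, like
every other operator changing the slots, is a combination of these. -/
noncomputable def slot (w : V) (p q : VGen ends w) : Module.End ℤ (SC ends) :=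
  Finsupp.linearCombination ℤ fun b =>
    if b.2 w = p then
      slotSign ends b.2 p q • Finsupp.single (b.1, Function.update b.2 w q) (1 : ℤ)
    else 0

lemma slot_single (w : V) (p q : VGen ends w) (m : E →₀ ℕ) (f : States ends) (a : ℤ) :
    slot ends w p q (Finsupp.single (m, f) a) =
      if f w = p then Finsupp.single (m, Function.update f w q) (a * slotSign ends f p q)
      else 0 := by
  split_ifs with h <;> simp [slot, h]

lemma slot_mul_slot (w : V) (p q r : VGen ends w) :
    slot ends w p q * slot ends w r p = slot ends w r q := by
  refine chain_hom_ext ends fun m f => ?_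
  have hsgn : sgn ends (Function.update f w p) w = sgn ends f w :=
    sgn_update_of_not_lt ends f p (lt_irrefl _)
  by_cases h : f w = r
  · simp only [Module.End.mul_apply, slot_single, h, if_true, Function.update_self,
      Function.update_idem, slotSign, hsgn]
    congr 1
    cases p.isLeft <;> cases q.isLeft <;> cases r.isLeft <;> simp [sgn_mul_self]
  · simp [slot_single, h]

lemma slot_mul_slot_of_ne (w : V) {p p' : VGen ends w} (q r : VGen ends w) (h : p' ≠ p) :
    slot ends w p q * slot ends w r p' = 0 := by
  refine chain_hom_ext ends fun m f => ?_
  rw [Module.End.mul_apply, slot_single]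
  split_ifs <;> simp [slot_single, h]

lemma stab_commute_slot (e : E) (w : V) (p q : VGen ends w) :
    Commute (stab ends e) (slot ends w p q) := by
  refine chain_hom_ext ends fun m f => ?_
  simp only [Module.End.mul_apply, stab_single, slot_single]
  split_ifs <;> simp [stab_single]

section Ne

variable {w w' : V} {p q : VGen ends w} {p' q' : VGen ends w'}

lemma slot_mul_slot_eq_smul (hw : w ≠ w') {ε : ℤ}
    (hsign : ∀ f : States ends, f w = p → f w' = p' →
      slotSign ends f p' q' * slotSign ends (Function.update f w' q') p q =
        ε * (slotSign ends f p q * slotSign ends (Function.update f w q) p' q')) :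
    slot ends w p q * slot ends w' p' q' = ε • (slot ends w' p' q' * slot ends w p q) := by
  refine chain_hom_ext ends fun m f => ?_
  by_cases h : f w = p <;> by_cases h' : f w' = p'
  · simp only [Module.End.mul_apply, LinearMap.smul_apply, slot_single, h, h', if_true,
      Function.update_of_ne hw, Function.update_of_ne hw.symm, one_mul, Finsupp.smul_single,
      smul_eq_mul]
    rw [Function.update_comm hw, hsign f h h']
  all_goals simp [slot_single, h, h', hw, hw.symm]

lemma slot_mul_slot_anticomm (hw : w ≠ w') (h : p.isLeft ≠ q.isLeft)
    (h' : p'.isLeft ≠ q'.isLeft) :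
    slot ends w p q * slot ends w' p' q' = -(slot ends w' p' q' * slot ends w p q) := by
  rw [← neg_one_smul ℤ]
  refine slot_mul_slot_eq_smul ends hw ?_
  rintro f rfl rfl
  simp only [slotSign, h, h', if_false]
  rcases lt_or_gt_of_ne (idx_injective.ne hw) with hlt | hlt
  · rw [sgn_update_of_lt ends f q hlt h, sgn_update_of_not_lt ends f q' hlt.not_gt]
    ring
  · rw [sgn_update_of_lt ends f q' hlt h', sgn_update_of_not_lt ends f q hlt.not_gt]
    ring

lemma slot_commute_slot (hw : w ≠ w') (h : p.isLeft = q.isLeft) :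
    Commute (slot ends w p q) (slot ends w' p' q') := by
  have := slot_mul_slot_eq_smul ends hw (p := p) (q := q) (p' := p') (q' := q') (ε := 1) <| by
    rintro f rfl rfl
    simp [slotSign, h, sgn_update_of_isLeft_eq ends f q w' h]
  rwa [one_smul] at this

end Ne

lemma sum_slot_self [Fintype E] (w : V) : ∑ p, slot ends w p p = 1 := by
  refine chain_hom_ext ends fun m f => ?_
  rw [LinearMap.sum_apply, Fintype.sum_eq_single (f w) fun p hp => by simp [slot_single, hp.symm]]
  simp [slot_single, slotSign]

end Slot

section Grading

variable {V E : Type}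

/-- The weight of a local generator: a half-edge and the vertex itself carry one particle each. -/
def genWt {ends : E → V × V} {w : V} (p : VGen ends w) : ℕ :=
  Sum.elim (fun _ => 1) (fun t => cond t 1 0) p

variable [Fintype V] (ends : E → V × V)

lemma degB_eq_sum (m : E →₀ ℕ) (f : States ends) :
    degB ends (m, f) = ∑ w, (f w).isLeft.toNat := by
  rw [degB, card_filter]
  exact sum_congr rfl fun w _ => by cases (f w).isLeft <;> rfl

lemma wtB_eq_degree_add_sum (m : E →₀ ℕ) (f : States ends) :
    wtB ends (m, f) = m.degree + ∑ w, genWt (f w) :=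
  rfl

lemma genWt_le_wtB (m : E →₀ ℕ) (f : States ends) (w : V) :
    genWt (f w) ≤ wtB ends (m, f) :=
  (single_le_sum (f := fun u => genWt (f u)) (fun _ _ => zero_le) (mem_univ w)).trans
    (Nat.le_add_left _ _)

variable [DecidableEq E]

lemma mem_of_smul_mem_hasDW {i k : ℕ} {n : ℤ} (hn : n ≠ 0) {x : SC ends}
    (hx : n • x ∈ hasDW ends i k) : x ∈ hasDW ends i k :=
  fun b hb => hx b (by simpa [hn] using hb)

lemma map_mem_hasDW {V' : Type} [Fintype V'] (ends' : E → V' × V') {i k i' k' : ℕ}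
    (F : SC ends →ₗ[ℤ] SC ends')
    (h : ∀ m f, degB ends (m, f) = i → wtB ends (m, f) = k →
      F (Finsupp.single (m, f) 1) ∈ hasDW ends' i' k') {x : SC ends} (hx : x ∈ hasDW ends i k) :
    F x ∈ hasDW ends' i' k' :=
  map_mem_of_mem_supported hx F _ fun b hb => h b.1 b.2 hb.1 hb.2

lemma single_mem_hasDW {i k : ℕ} {b : Bas ends} (hi : degB ends b = i) (hk : wtB ends b = k)
    (a : ℤ) : Finsupp.single b a ∈ hasDW ends i k :=
  Finsupp.single_mem_supported ℤ a ⟨hi, hk⟩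

lemma stab_mem_hasDW (e : E) {i k : ℕ} {x : SC ends} (hx : x ∈ hasDW ends i k) :
    stab ends e x ∈ hasDW ends i (k + 1) := by
  refine map_mem_hasDW ends ends _ (fun m f hi hk => ?_) hx
  rw [stab_single]
  refine single_mem_hasDW ends (by exact hi) ?_ 1
  rw [← hk, wtB_eq_degree_add_sum, wtB_eq_degree_add_sum, map_add, Finsupp.degree_single]
  omega

lemma stab_sub_stab_pow_mem_hasDW (e₁ e₂ : E) {i k : ℕ} (n : ℕ) {x : SC ends}
    (hx : x ∈ hasDW ends i k) :
    ((-(stab ends e₁ - stab ends e₂ : Module.End ℤ (SC ends))) ^ n) x ∈ hasDW ends i (k + n) := by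
  induction n with
  | zero => simpa using hx
  | succ n ih =>
    rw [pow_succ', Module.End.mul_apply]
    exact neg_mem (sub_mem (stab_mem_hasDW ends e₁ ih) (stab_mem_hasDW ends e₂ ih))

variable [DecidableEq V]

lemma slot_mem_hasDW {w : V} {p q : VGen ends w} {i k i' k' : ℕ}
    (hi : i + q.isLeft.toNat = i' + p.isLeft.toNat) (hk : k + genWt q = k' + genWt p)
    {x : SC ends} (hx : x ∈ hasDW ends i k) : slot ends w p q x ∈ hasDW ends i' k' := by
  refine map_mem_hasDW ends ends _ (fun m f hdeg hwt => ?_) hx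
  rw [slot_single]
  split_ifs with hf
  · have sum_deg := sum_apply_update_add (X := VGen ends) (fun _ a => a.isLeft.toNat) f w q
    have sum_wt := sum_apply_update_add (X := VGen ends) (fun _ a => genWt a) f w q
    rw [degB_eq_sum] at hdeg
    rw [wtB_eq_degree_add_sum] at hwt
    subst hf
    refine single_mem_hasDW ends ?_ ?_ _
    · rw [degB_eq_sum]
      omega
    · rw [wtB_eq_degree_add_sum]
      omega
  · exact zero_mem _

lemma slot_apply_eq_zero_of_lt_genWt {w : V} {p : VGen ends w} (q : VGen ends w) {i k : ℕ}
    (hp : k < genWt p) {x : SC ends} (hx : x ∈ hasDW ends i k) : slot ends w p q x = 0 := by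
  refine map_eq_map_of_mem_supported hx (G := 0) ?_
  rintro ⟨m, f⟩ ⟨-, hwt⟩
  rw [slot_single, if_neg, LinearMap.zero_apply]
  rintro rfl
  exact absurd (genWt_le_wtB ends m f w) (by omega)

end Grading

section Differential

variable {V E : Type} [Fintype V] [Fintype E] [DecidableEq V] [DecidableEq E] (ends : E → V × V)

/-- The summand at the vertex `w` of the Świątkowski differential. -/
noncomputable def vertexD (w : V) : Module.End ℤ (SC ends) :=
  ∑ h : {h : E × Bool // vtx ends h = w},
    (stab ends h.1.1 * slot ends w (Sum.inl h) (Sum.inr false)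
      - slot ends w (Sum.inl h) (Sum.inr true))

/-- The differential restricted to the slots at the vertices in `U`. -/
noncomputable def partialD (U : Finset V) : Module.End ℤ (SC ends) :=
  ∑ w ∈ U, vertexD ends w

lemma vertexD_single_of_eq_inl {w : V} (m : E →₀ ℕ) {f : States ends} {h}
    (hf : f w = Sum.inl h) :
    vertexD ends w (Finsupp.single (m, f) 1) = sgn ends f w •
      (Finsupp.single (m + Finsupp.single h.1.1 1, Function.update f w (Sum.inr false)) 1
        - Finsupp.single (m, Function.update f w (Sum.inr true)) 1) := by
  rw [vertexD, LinearMap.sum_apply, Fintype.sum_eq_single h fun h' hh' => by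
    simp [slot_single, hf, hh'.symm]]
  simp [slot_single, stab_single, slotSign, hf, smul_sub]

lemma vertexD_single_of_eq_inr {w : V} (m : E →₀ ℕ) {f : States ends} {t : Bool}
    (hf : f w = Sum.inr t) : vertexD ends w (Finsupp.single (m, f) 1) = 0 := by
  rw [vertexD, LinearMap.sum_apply]
  exact sum_eq_zero fun h _ => by simp [slot_single, hf]

lemma D_eq_partialD_univ : D ends = partialD ends univ := by
  refine chain_hom_ext ends fun m f => ?_
  rw [partialD, LinearMap.sum_apply, D, Finsupp.linearCombination_single, one_smul, Db]
  refine sum_congr rfl fun w _ => ?_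
  split
  · next h hf => rw [vertexD_single_of_eq_inl ends m hf]
  · next t hf => rw [vertexD_single_of_eq_inr ends m hf]

lemma D_eq_vertexD_add (v : V) : D ends = vertexD ends v + partialD ends (univ.erase v) := by
  rw [D_eq_partialD_univ, partialD, partialD, add_sum_erase _ _ (mem_univ v)]

lemma stab_commute_vertexD (e : E) (w : V) : Commute (stab ends e) (vertexD ends w) :=
  Commute.sum_right _ _ _ fun _ _ =>
    ((stab_commute_stab ends _ _).mul_right (stab_commute_slot ends _ _ _ _)).sub_right
      (stab_commute_slot ends _ _ _ _)

lemma stab_commute_partialD (e : E) (U : Finset V) : Commute (stab ends e) (partialD ends U) :=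
  Commute.sum_right _ _ _ fun _ _ => stab_commute_vertexD ends _ _

lemma mul_vertexD_anticomm {w : V} {X : Module.End ℤ (SC ends)}
    (hstab : ∀ e, Commute (stab ends e) X)
    (hslot : ∀ h t, X * slot ends w (Sum.inl h) (Sum.inr t) =
      -(slot ends w (Sum.inl h) (Sum.inr t) * X)) :
    X * vertexD ends w = -(vertexD ends w * X) := by
  rw [vertexD, mul_sum, sum_mul, ← sum_neg_distrib]
  refine sum_congr rfl fun h _ => ?_
  rw [mul_sub, sub_mul, hslot, ← mul_assoc, ← (hstab _).eq, mul_assoc, hslot, mul_neg, mul_assoc]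
  abel

lemma slot_mul_vertexD_anticomm {w w' : V} (hw : w ≠ w') {p q : VGen ends w}
    (h : p.isLeft ≠ q.isLeft) :
    slot ends w p q * vertexD ends w' = -(vertexD ends w' * slot ends w p q) :=
  mul_vertexD_anticomm ends (fun e => stab_commute_slot ends e w p q)
    fun _ _ => slot_mul_slot_anticomm ends hw h (by simp)

lemma slot_commute_vertexD {w w' : V} (hw : w ≠ w') {p q : VGen ends w}
    (h : p.isLeft = q.isLeft) : Commute (slot ends w p q) (vertexD ends w') :=
  Commute.sum_right _ _ _ fun _ _ =>
    ((stab_commute_slot ends _ _ _ _).symm.mul_right (slot_commute_slot ends hw h)).sub_right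
      (slot_commute_slot ends hw h)

lemma vertexD_mul_vertexD_anticomm {w w' : V} (hw : w ≠ w') :
    vertexD ends w * vertexD ends w' = -(vertexD ends w' * vertexD ends w) :=
  mul_vertexD_anticomm ends (fun e => stab_commute_vertexD ends e w) fun _ _ => by
    rw [slot_mul_vertexD_anticomm ends hw.symm (by simp), neg_neg]

lemma slot_inl_mul_vertexD (w : V) (h : {h : E × Bool // vtx ends h = w}) (q : VGen ends w) :
    slot ends w (Sum.inl h) q * vertexD ends w = 0 := by
  rw [vertexD, mul_sum]
  refine sum_eq_zero fun h' _ => ?_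
  rw [mul_sub, ← mul_assoc, ← (stab_commute_slot ends _ _ _ _).eq, mul_assoc,
    slot_mul_slot_of_ne ends w _ _ Sum.inr_ne_inl, slot_mul_slot_of_ne ends w _ _ Sum.inr_ne_inl,
    mul_zero, sub_zero]

lemma vertexD_mul_self (w : V) : vertexD ends w * vertexD ends w = 0 := by
  nth_rewrite 1 [vertexD]
  rw [sum_mul]
  refine sum_eq_zero fun h _ => ?_
  rw [sub_mul, mul_assoc, slot_inl_mul_vertexD, slot_inl_mul_vertexD, mul_zero, sub_zero]

lemma partialD_mul_self (U : Finset V) : partialD ends U * partialD ends U = 0 :=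
  sum_mul_sum_self_eq_zero U (vertexD ends) (vertexD_mul_self ends) fun _ _ =>
    vertexD_mul_vertexD_anticomm ends

lemma partialD_mem_hasDW (U : Finset V) {i k : ℕ} {x : SC ends} (hx : x ∈ hasDW ends (i + 1) k) :
    partialD ends U x ∈ hasDW ends i k := by
  simp only [partialD, vertexD, LinearMap.sum_apply, LinearMap.sub_apply, Module.End.mul_apply]
  refine sum_mem fun w _ => sum_mem fun h _ => sub_mem ?_ ?_
  · rcases k with _ | k
    · rw [slot_apply_eq_zero_of_lt_genWt ends _ (by simp [genWt]) hx, map_zero]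
      exact zero_mem _
    · exact stab_mem_hasDW ends _ (slot_mem_hasDW ends (by simp) (by simp [genWt]) hx)
  · exact slot_mem_hasDW ends (by simp) (by simp [genWt]) hx

lemma slot_mul_partialD_anticomm {U : Finset V} {v : V} (hv : v ∉ U) {p q : VGen ends v}
    (h : p.isLeft ≠ q.isLeft) :
    slot ends v p q * partialD ends U = -(partialD ends U * slot ends v p q) := by
  rw [partialD, mul_sum, sum_mul, ← sum_neg_distrib]
  exact sum_congr rfl fun w hw =>
    slot_mul_vertexD_anticomm ends (ne_of_mem_of_not_mem hw hv).symm h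

lemma slot_commute_partialD {U : Finset V} {v : V} (hv : v ∉ U) {p q : VGen ends v}
    (h : p.isLeft = q.isLeft) : Commute (slot ends v p q) (partialD ends U) :=
  Commute.sum_right _ _ _ fun _ hw =>
    slot_commute_vertexD ends (ne_of_mem_of_not_mem hw hv).symm h

lemma vertexD_mul_slot_inl {v : V} (p : VGen ends v) (h : {h : E × Bool // vtx ends h = v}) :
    vertexD ends v * slot ends v p (Sum.inl h) =
      stab ends h.1.1 * slot ends v p (Sum.inr false) - slot ends v p (Sum.inr true) := by
  rw [vertexD, sum_mul, Fintype.sum_eq_single h]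
  · rw [sub_mul, mul_assoc, slot_mul_slot, slot_mul_slot]
  · intro h' hh'
    have hne : (Sum.inl h : VGen ends v) ≠ Sum.inl h' := by simpa using hh'.symm
    rw [sub_mul, mul_assoc, slot_mul_slot_of_ne ends v _ _ hne, slot_mul_slot_of_ne ends v _ _ hne,
      mul_zero, sub_zero]

lemma D_mem_hasDW {i k : ℕ} {x : SC ends} (hx : x ∈ hasDW ends (i + 1) k) :
    D ends x ∈ hasDW ends i k := by
  rw [D_eq_partialD_univ]
  exact partialD_mem_hasDW ends univ hx

lemma D_mem_cyc {i k : ℕ} {x : SC ends} (hx : x ∈ hasDW ends (i + 1) k) :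
    D ends x ∈ cyc ends i k := by
  refine ⟨LinearMap.mem_ker.2 ?_, D_mem_hasDW ends hx⟩
  rw [D_eq_partialD_univ, ← Module.End.mul_apply, partialD_mul_self, LinearMap.zero_apply]

end Differential

section EdgeRemoval

variable {V E : Type} (ends : E → V × V)

/-- The partial derivative with respect to the edge `e`, removing one of the particles on it. -/
noncomputable def edgeRemoval (e : E) : Module.End ℤ (SC ends) :=
  Finsupp.linearCombination ℤ fun b =>
    (b.1 e : ℤ) • Finsupp.single (b.1 - Finsupp.single e 1, b.2) (1 : ℤ)

lemma edgeRemoval_single (e : E) (m : E →₀ ℕ) (f : States ends) (a : ℤ) :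
    edgeRemoval ends e (Finsupp.single (m, f) a) =
      Finsupp.single (m - Finsupp.single e 1, f) (a * m e) := by
  simp [edgeRemoval]

lemma edgeRemoval_pow_single (e : E) (n : ℕ) (m : E →₀ ℕ) (f : States ends) :
    (edgeRemoval ends e ^ n) (Finsupp.single (m, f) 1) =
      Finsupp.single (m - Finsupp.single e n, f) ((m e).descFactorial n : ℤ) := by
  induction n with
  | zero => simp
  | succ n ih =>
    rw [pow_succ', Module.End.mul_apply, ih, edgeRemoval_single, tsub_tsub, ← Finsupp.single_add,
      Nat.descFactorial_succ, mul_comm]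
    simp

lemma edgeRemoval_hasDividedPowers (e : E) : HasDividedPowers (edgeRemoval ends e) := by
  intro n
  refine ⟨Finsupp.linearCombination ℤ fun b =>
    ((b.1 e).choose n : ℤ) • Finsupp.single (b.1 - Finsupp.single e n, b.2) (1 : ℤ), ?_⟩
  refine chain_hom_ext ends fun m f => ?_
  rw [edgeRemoval_pow_single, Nat.descFactorial_eq_factorial_mul_choose]
  simp

lemma edgeRemoval_commute_edgeRemoval (e e' : E) :
    Commute (edgeRemoval ends e) (edgeRemoval ends e') := by
  rcases eq_or_ne e e' with rfl | he
  · exact Commute.refl _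
  refine chain_hom_ext ends fun m f => ?_
  simp only [Module.End.mul_apply, edgeRemoval_single, tsub_right_comm]
  simp [he, he.symm, mul_comm]

lemma edgeRemoval_mul_stab_self (e : E) :
    edgeRemoval ends e * stab ends e = stab ends e * edgeRemoval ends e + 1 := by
  refine chain_hom_ext ends fun m f => ?_
  rw [LinearMap.add_apply, Module.End.mul_apply, Module.End.mul_apply, stab_single,
    edgeRemoval_single, edgeRemoval_single, stab_single, add_tsub_cancel_right]
  rcases Nat.eq_zero_or_pos (m e) with hm | hm
  · simp [hm]
  · have hle : Finsupp.single e 1 ≤ m := Finsupp.single_le_iff.2 hm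
    rw [tsub_add_cancel_of_le hle, Module.End.one_apply,
      ← Finsupp.single_add]
    simp

lemma edgeRemoval_commute_stab {e e' : E} (he : e ≠ e') :
    Commute (edgeRemoval ends e) (stab ends e') := by
  refine chain_hom_ext ends fun m f => ?_
  have hm : m + Finsupp.single e' 1 - Finsupp.single e 1
      = m - Finsupp.single e 1 + Finsupp.single e' 1 := by
    ext u
    rcases eq_or_ne u e with rfl | hu <;> simp [*]
  simp [stab_single, edgeRemoval_single, he, hm]

variable [Fintype V] [DecidableEq E]

lemma edgeRemoval_mem_hasDW (e : E) {i k : ℕ} {x : SC ends} (hx : x ∈ hasDW ends i (k + 1)) :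
    edgeRemoval ends e x ∈ hasDW ends i k := by
  refine map_mem_hasDW ends ends _ (fun m f hi hk => ?_) hx
  rw [edgeRemoval_single]
  rcases Nat.eq_zero_or_pos (m e) with hm | hm
  · simp [hm]
  · refine single_mem_hasDW ends (by exact hi) ?_ _
    have hle : Finsupp.single e 1 ≤ m := Finsupp.single_le_iff.2 hm
    have hdeg : (m - Finsupp.single e 1).degree + 1 = m.degree := by
      simpa using congrArg Finsupp.degree (tsub_add_cancel_of_le hle)
    rw [wtB_eq_degree_add_sum] at hk ⊢
    omega

lemma edgeRemoval_apply_eq_zero (e : E) {i : ℕ} {x : SC ends} (hx : x ∈ hasDW ends i 0) :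
    edgeRemoval ends e x = 0 := by
  refine map_eq_map_of_mem_supported hx (G := 0) ?_
  rintro ⟨m, f⟩ ⟨-, hwt⟩
  rw [wtB_eq_degree_add_sum, add_eq_zero, Finsupp.degree_eq_zero_iff] at hwt
  simp [edgeRemoval_single, hwt.1]

variable [DecidableEq V]

lemma edgeRemoval_commute_slot (e : E) (w : V) (p q : VGen ends w) :
    Commute (edgeRemoval ends e) (slot ends w p q) := by
  refine chain_hom_ext ends fun m f => ?_
  simp only [Module.End.mul_apply, slot_single, edgeRemoval_single]
  split_ifs <;> simp [edgeRemoval_single, mul_comm]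

end EdgeRemoval

section Removal

variable {V E : Type} [Fintype V] [Fintype E] [DecidableEq V] [DecidableEq E] (ends : E → V × V)
  (c : E → ℤ) (d : V → ℤ)

/-- The derivation removing one particle from an edge `e` with weight `c e`, or from a vertex `w`
with weight `d w`; particles on half-edges are not affected. -/
noncomputable def removal : Module.End ℤ (SC ends) :=
  ∑ e, c e • edgeRemoval ends e + ∑ w, d w • slot ends w (Sum.inr true) (Sum.inr false)

/-- The edge weights `c` and vertex weights `d` agree along each half-edge at a vertex of `U`, so
that they form a locally constant function on the open stars of these vertices. -/
def LocallyConstOn (U : Finset V) : Prop :=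
  ∀ h : E × Bool, vtx ends h ∈ U → c h.1 = d (vtx ends h)

lemma removal_hasDividedPowers : HasDividedPowers (removal ends c d) := by
  have edge_dvd : HasDividedPowers (∑ e, c e • edgeRemoval ends e) :=
    .sum _ _ (fun e _ => (edgeRemoval_hasDividedPowers ends e).zsmul _) fun e e' =>
      ((edgeRemoval_commute_edgeRemoval ends e e').smul_left _).smul_right _
  have vertex_dvd :
      HasDividedPowers (∑ w, d w • slot ends w (Sum.inr true) (Sum.inr false)) := by
    refine .sum _ _ (fun w _ => (HasDividedPowers.of_mul_self_eq_zero ?_).zsmul _)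
      fun w w' => ?_
    · exact slot_mul_slot_of_ne ends w _ _ (by simp)
    · rcases eq_or_ne w w' with rfl | hw
      · exact Commute.refl _
      · exact ((slot_commute_slot ends hw (by simp)).smul_left _).smul_right _
  exact edge_dvd.add vertex_dvd <| Commute.sum_left _ _ _ fun e _ =>
    Commute.sum_right _ _ _ fun w _ =>
      ((edgeRemoval_commute_slot ends e w _ _).smul_left _).smul_right _

lemma removal_mul_stab (e : E) :
    removal ends c d * stab ends e = stab ends e * removal ends c d + c e • 1 := by
  have edge_mul : (∑ e', c e' • edgeRemoval ends e') * stab ends e =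
      stab ends e * ∑ e', c e' • edgeRemoval ends e' + c e • 1 := by
    refine sum_mul_eq_mul_sum_add e ?_ fun e' he' =>
      (edgeRemoval_commute_stab ends he').smul_left _
    rw [smul_mul_assoc, edgeRemoval_mul_stab_self, smul_add, mul_smul_comm]
  have vertex_comm : Commute (∑ w, d w • slot ends w (Sum.inr true) (Sum.inr false))
      (stab ends e) :=
    Commute.sum_left _ _ _ fun w _ => (stab_commute_slot ends e w _ _).symm.smul_left _
  rw [removal, add_mul, edge_mul, vertex_comm.eq, mul_add]
  abel

lemma removal_mul_slot_inl (w : V) (h : {h : E × Bool // vtx ends h = w}) (t : Bool) :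
    removal ends c d * slot ends w (Sum.inl h) (Sum.inr t) =
      slot ends w (Sum.inl h) (Sum.inr t) * removal ends c d +
        if t then d w • slot ends w (Sum.inl h) (Sum.inr false) else 0 := by
  set s := slot ends w (Sum.inl h) (Sum.inr t) with hs
  have edge_comm : Commute (∑ e, c e • edgeRemoval ends e) s :=
    Commute.sum_left _ _ _ fun e _ => (edgeRemoval_commute_slot ends e w _ _).smul_left _
  have vertex_mul : (∑ u, d u • slot ends u (Sum.inr true) (Sum.inr false)) * s =
      s * (∑ u, d u • slot ends u (Sum.inr true) (Sum.inr false)) +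
        if t then d w • slot ends w (Sum.inl h) (Sum.inr false) else 0 := by
    refine sum_mul_eq_mul_sum_add w ?_ fun u hu =>
      (slot_commute_slot ends hu (by simp)).smul_left _
    rw [mul_smul_comm, hs, slot_mul_slot_of_ne ends w _ _ Sum.inr_ne_inl, smul_mul_assoc]
    cases t
    · simp [slot_mul_slot_of_ne]
    · simp [slot_mul_slot]
  rw [removal, add_mul, edge_comm.eq, vertex_mul, mul_add]
  abel

variable {c d} {U : Finset V}

lemma removal_commute_partialD (hcd : LocallyConstOn ends c d U) :
    Commute (removal ends c d) (partialD ends U) := by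
  refine Commute.sum_right _ _ _ fun w hw => Commute.sum_right _ _ _ fun ⟨h, hhw⟩ _ => ?_
  have hcw : c h.1 = d w := by rw [hcd h (hhw ▸ hw), hhw]
  rw [commute_iff_eq, mul_sub, ← mul_assoc, removal_mul_stab, add_mul, mul_assoc,
    removal_mul_slot_inl, removal_mul_slot_inl, hcw]
  simp only [Bool.false_eq_true, if_false, if_true, add_zero, smul_mul_assoc, one_mul, sub_mul,
    mul_assoc]
  abel

lemma removal_mem_hasDW {i k : ℕ} {x : SC ends} (hx : x ∈ hasDW ends i (k + 1)) :
    removal ends c d x ∈ hasDW ends i k := by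
  simp only [removal, LinearMap.add_apply, LinearMap.sum_apply, LinearMap.smul_apply]
  exact add_mem
    (sum_mem fun e _ => Submodule.smul_mem _ _ (edgeRemoval_mem_hasDW ends e hx))
    (sum_mem fun w _ => Submodule.smul_mem _ _
      (slot_mem_hasDW ends (by simp) (by simp [genWt]) hx))

lemma removal_apply_eq_zero {i : ℕ} {x : SC ends} (hx : x ∈ hasDW ends i 0) :
    removal ends c d x = 0 := by
  have vertex_zero (w : V) : slot ends w (Sum.inr true) (Sum.inr false) x = 0 :=
    slot_apply_eq_zero_of_lt_genWt ends _ (by simp [genWt]) hx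
  simp [removal, edgeRemoval_apply_eq_zero ends _ hx, vertex_zero]

lemma removal_pow_mem_hasDW {i k : ℕ} (n : ℕ) {x : SC ends} (hx : x ∈ hasDW ends i (k + n)) :
    (removal ends c d ^ n) x ∈ hasDW ends i k := by
  induction n generalizing k with
  | zero => simpa using hx
  | succ n ih =>
    rw [pow_succ', Module.End.mul_apply]
    exact removal_mem_hasDW ends (ih (by rwa [add_right_comm, add_assoc]))

lemma removal_pow_succ_apply_eq_zero {i k : ℕ} {x : SC ends} (hx : x ∈ hasDW ends i k) :
    (removal ends c d ^ (k + 1)) x = 0 := by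
  rw [pow_succ', Module.End.mul_apply]
  exact removal_apply_eq_zero ends (removal_pow_mem_hasDW ends k (by rwa [zero_add]))

theorem mem_map_partialD_of_stab_sub_stab_mem (hcd : LocallyConstOn ends c d U) {e₁ e₂ : E}
    (hc : c e₁ - c e₂ = 1) {i k : ℕ} {x : SC ends} (hx : x ∈ hasDW ends i k)
    (hex : (stab ends e₁ - stab ends e₂) x ∈ (hasDW ends (i + 1) (k + 1)).map (partialD ends U)) :
    x ∈ (hasDW ends (i + 1) k).map (partialD ends U) := by
  obtain ⟨w, hw, hxw⟩ := hex
  have hmul : removal ends c d * (stab ends e₁ - stab ends e₂) =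
      (stab ends e₁ - stab ends e₂) * removal ends c d + 1 := by
    rw [mul_sub, removal_mul_stab, removal_mul_stab, sub_mul, add_sub_add_comm, ← sub_smul, hc,
      one_smul]
  obtain ⟨z, hz, hxz⟩ := (removal_hasDividedPowers ends c d).exists_eq_apply_sum hmul
    (removal_commute_partialD ends hcd)
    ((stab_commute_partialD ends e₁ U).sub_left (stab_commute_partialD ends e₂ U)) hxw.symm
    (removal_pow_succ_apply_eq_zero ends hx)
  refine ⟨_, sum_mem fun n hn => ?_, hxz.symm⟩
  obtain ⟨j, rfl⟩ := Nat.exists_eq_add_of_le (mem_range_succ_iff.1 hn)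
  have hzn : z n ∈ hasDW ends (i + 1) j := by
    refine mem_of_smul_mem_hasDW ends (Nat.cast_ne_zero.2 (n + 1).factorial_ne_zero) ?_
    rw [Nat.cast_smul_eq_nsmul, hz]
    exact removal_pow_mem_hasDW ends (n + 1) (by rwa [add_left_comm, ← add_assoc])
  rw [add_comm n j]
  exact stab_sub_stab_pow_mem_hasDW ends e₁ e₂ n hzn

end Removal

section Vacant

variable {V E : Type} (ends : E → V × V)

/-- The chains with `∅` in the slot at `v`. -/
def vacant (v : V) : Submodule ℤ (SC ends) :=
  Finsupp.supported ℤ ℤ {b | b.2 v = Sum.inr false}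

lemma stab_mem_vacant (e : E) {v : V} {x : SC ends} (hx : x ∈ vacant ends v) :
    stab ends e x ∈ vacant ends v := by
  refine map_mem_of_mem_supported hx _ _ fun b hb => ?_
  rw [stab_single]
  exact Finsupp.single_mem_supported ℤ _ hb

variable [Fintype V] [DecidableEq V] [DecidableEq E]

lemma slot_mem_vacant {v : V} (p : VGen ends v) (x : SC ends) :
    slot ends v p (Sum.inr false) x ∈ vacant ends v := by
  refine map_mem_of_mem_supported (s := Set.univ) (by simp) _ _ fun b _ => ?_
  rw [slot_single]
  split_ifs
  · exact Finsupp.single_mem_supported ℤ _ (by simp)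
  · exact zero_mem _

variable [Fintype E]

/-- The projection onto the chains with a half-edge in the slot at `v`. -/
noncomputable def halfEdgeProj (v : V) : Module.End ℤ (SC ends) :=
  ∑ h : {h : E × Bool // vtx ends h = v}, slot ends v (Sum.inl h) (Sum.inl h)

lemma halfEdgeProj_add_slot_add_slot (v : V) :
    halfEdgeProj ends v + (slot ends v (Sum.inr true) (Sum.inr true) +
      slot ends v (Sum.inr false) (Sum.inr false)) = 1 := by
  rw [← sum_slot_self ends v, Fintype.sum_sum_type, Fintype.sum_bool, halfEdgeProj]

lemma slot_inl_mul_halfEdgeProj {v : V} (h : {h : E × Bool // vtx ends h = v}) (q : VGen ends v) :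
    slot ends v (Sum.inl h) q * halfEdgeProj ends v = slot ends v (Sum.inl h) q := by
  rw [halfEdgeProj, mul_sum, Fintype.sum_eq_single h, slot_mul_slot]
  exact fun h' hh' => slot_mul_slot_of_ne ends v _ _ (by simpa using hh')

lemma halfEdgeProj_mul_self (v : V) :
    halfEdgeProj ends v * halfEdgeProj ends v = halfEdgeProj ends v := by
  nth_rewrite 1 [halfEdgeProj]
  simp only [sum_mul, slot_inl_mul_halfEdgeProj]
  rfl

lemma vertexD_mul_halfEdgeProj (v : V) :
    vertexD ends v * halfEdgeProj ends v = vertexD ends v := by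
  simp only [vertexD, sum_mul, sub_mul, mul_assoc, slot_inl_mul_halfEdgeProj]

lemma halfEdgeProj_mul_vertexD (v : V) : halfEdgeProj ends v * vertexD ends v = 0 := by
  simp only [halfEdgeProj, sum_mul, slot_inl_mul_vertexD, sum_const_zero]

lemma stab_commute_halfEdgeProj (e : E) (v : V) :
    Commute (stab ends e) (halfEdgeProj ends v) :=
  Commute.sum_right _ _ _ fun _ _ => stab_commute_slot ends e v _ _

lemma halfEdgeProj_commute_partialD {U : Finset V} {v : V} (hv : v ∉ U) :
    Commute (halfEdgeProj ends v) (partialD ends U) :=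
  Commute.sum_left _ _ _ fun _ _ => slot_commute_partialD ends hv rfl

lemma halfEdgeProj_mem_hasDW (v : V) {i k : ℕ} {x : SC ends} (hx : x ∈ hasDW ends i k) :
    halfEdgeProj ends v x ∈ hasDW ends i k := by
  rw [halfEdgeProj, LinearMap.sum_apply]
  exact sum_mem fun _ _ => slot_mem_hasDW ends rfl rfl hx

lemma halfEdgeProj_mul_D (v : V) :
    halfEdgeProj ends v * D ends = partialD ends (univ.erase v) * halfEdgeProj ends v := by
  rw [D_eq_vertexD_add ends v, mul_add, halfEdgeProj_mul_vertexD, zero_add,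
    (halfEdgeProj_commute_partialD ends (notMem_erase v univ)).eq]

/-- Moving a particle from the vertex `v` along the half-edge `h` onto its edge is a homotopy from
the vertex generator to an edge. -/
lemma add_D_slot_mem_vacant {v : V} (h : {h : E × Bool // vtx ends h = v}) {x : SC ends}
    (hDx : D ends x = 0) (hx : halfEdgeProj ends v x = 0) :
    x + D ends (slot ends v (Sum.inr true) (Sum.inl h) x) ∈ vacant ends v := by
  have vertexD_zero : vertexD ends v x = 0 := by
    rw [← vertexD_mul_halfEdgeProj, Module.End.mul_apply, hx, map_zero]
  have partialD_zero : partialD ends (univ.erase v) x = 0 := by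
    rwa [D_eq_vertexD_add ends v, LinearMap.add_apply, vertexD_zero, zero_add] at hDx
  have partialD_slot :
      partialD ends (univ.erase v) (slot ends v (Sum.inr true) (Sum.inl h) x) = 0 := by
    have anti := LinearMap.congr_fun (slot_mul_partialD_anticomm ends (notMem_erase v univ)
      (p := Sum.inr true) (q := Sum.inl h) (by simp)) x
    simpa [partialD_zero] using anti.symm
  have decomp := LinearMap.congr_fun (halfEdgeProj_add_slot_add_slot ends v) x
  have vertexD_slot := LinearMap.congr_fun (vertexD_mul_slot_inl ends (Sum.inr true) h) x
  simp only [LinearMap.add_apply, LinearMap.sub_apply, Module.End.mul_apply, Module.End.one_apply,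
    hx, zero_add] at decomp vertexD_slot
  have key : x + D ends (slot ends v (Sum.inr true) (Sum.inl h) x) =
      slot ends v (Sum.inr false) (Sum.inr false) x +
        stab ends h.1.1 (slot ends v (Sum.inr true) (Sum.inr false) x) := by
    rw [D_eq_vertexD_add ends v, LinearMap.add_apply, partialD_slot, vertexD_slot]
    nth_rewrite 1 [← decomp]
    abel
  rw [key]
  exact add_mem (slot_mem_vacant ends _ _) (stab_mem_vacant ends _ (slot_mem_vacant ends _ _))

variable {ends} {c : E → ℤ} {d : V → ℤ} {v : V} {e₁ e₂ : E} {i k : ℕ} {x : SC ends}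

theorem exists_halfEdgeProj_sub_D_eq_zero (hcd : LocallyConstOn ends c d (univ.erase v))
    (hc : c e₁ - c e₂ = 1) (hx : x ∈ hasDW ends i k)
    (hex : (stab ends e₁ - stab ends e₂) x ∈ bdry ends i (k + 1)) :
    ∃ g ∈ hasDW ends (i + 1) k, halfEdgeProj ends v (x - D ends g) = 0 := by
  obtain ⟨w, hw, hxw⟩ := hex
  have proj_D (y : SC ends) : halfEdgeProj ends v (D ends y) =
      partialD ends (univ.erase v) (halfEdgeProj ends v y) :=
    LinearMap.congr_fun (halfEdgeProj_mul_D ends v) y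
  have proj_stab : (stab ends e₁ - stab ends e₂) (halfEdgeProj ends v x) =
      halfEdgeProj ends v ((stab ends e₁ - stab ends e₂) x) :=
    LinearMap.congr_fun ((stab_commute_halfEdgeProj ends e₁ v).sub_left
      (stab_commute_halfEdgeProj ends e₂ v)).eq x
  obtain ⟨g, hg, hxg⟩ := mem_map_partialD_of_stab_sub_stab_mem ends hcd hc
    (halfEdgeProj_mem_hasDW ends v hx)
    ⟨_, halfEdgeProj_mem_hasDW ends v hw, by rw [← proj_D, hxw, proj_stab]⟩
  have proj_comm : partialD ends (univ.erase v) (halfEdgeProj ends v g) =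
      halfEdgeProj ends v (partialD ends (univ.erase v) g) :=
    (LinearMap.congr_fun (halfEdgeProj_commute_partialD ends (notMem_erase v univ)).eq g).symm
  refine ⟨g, hg, ?_⟩
  rw [map_sub, proj_D, proj_comm, hxg, ← Module.End.mul_apply, halfEdgeProj_mul_self, sub_self]

theorem exists_vacant_homologous (hcd : LocallyConstOn ends c d (univ.erase v))
    (hc : c e₁ - c e₂ = 1) (hx : x ∈ cyc ends i k)
    (hex : (stab ends e₁ - stab ends e₂) x ∈ bdry ends i (k + 1)) :
    ∃ x' ∈ cyc ends i k ⊓ vacant ends v, ∃ z ∈ hasDW ends (i + 1) k, x = x' + D ends z := by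
  rcases isEmpty_or_nonempty {h : E × Bool // vtx ends h = v} with hv | ⟨⟨h⟩⟩
  · have D_eq : D ends = partialD ends (univ.erase v) := by
      rw [D_eq_vertexD_add ends v, vertexD, sum_of_isEmpty, zero_add]
    rw [bdry, D_eq] at hex
    obtain ⟨z, hz, hxz⟩ := mem_map_partialD_of_stab_sub_stab_mem ends hcd hc hx.2 hex
    exact ⟨0, zero_mem _, z, hz, by rw [zero_add, D_eq, hxz]⟩
  · obtain ⟨g, hg, hPg⟩ := exists_halfEdgeProj_sub_D_eq_zero hcd hc hx.2 hex
    have hxg : x - D ends g ∈ cyc ends i k := sub_mem hx (D_mem_cyc ends hg)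
    set y := slot ends v (Sum.inr true) (Sum.inl h) (x - D ends g)
    have hy : y ∈ hasDW ends (i + 1) k := slot_mem_hasDW ends (by simp) (by simp [genWt]) hxg.2
    refine ⟨x - D ends g + D ends y, ⟨add_mem hxg (D_mem_cyc ends hy), ?_⟩, g - y,
      sub_mem hg hy, ?_⟩
    · exact add_D_slot_mem_vacant ends h hxg.1 hPg
    · rw [map_sub]
      abel

end Vacant

section Explosion

variable {V E : Type} (ends : E → V × V)

lemma sgn_eq_one_of_degB_eq_one [Fintype V] {m : E →₀ ℕ} {f : States ends} {w : V}
    (h : degB ends (m, f) = 1) (hw : (f w).isLeft = true) : sgn ends f w = 1 := by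
  obtain ⟨u, hu⟩ := card_eq_one.1 h
  have eq_u (w' : V) (hw' : (f w').isLeft = true) : w' = u :=
    mem_singleton.1 (hu ▸ mem_filter.2 ⟨mem_univ w', hw'⟩)
  rw [sgn, filter_false_of_mem]
  · simp
  · rintro w' - ⟨hlt, hw'⟩
    rw [eq_u w' hw', eq_u w hw] at hlt
    exact lt_irrefl _ hlt

variable [DecidableEq V] (v : V)

lemma vtx_exEnds_eq_inl {h : E × Bool} {w : V} (hw : w ≠ v) (hh : vtx ends h = w) :
    vtx (exEnds ends v) h = Sum.inl ⟨w, hw⟩ := by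
  subst hh
  rcases h with ⟨e, _ | _⟩ <;> exact dif_neg hw

lemma sum_exVert [Fintype V] [Fintype E] {M : Type*} [AddCommMonoid M] {G : ExVert ends v → M}
    {F : V → M} (hinl : ∀ w (hw : w ≠ v), G (Sum.inl ⟨w, hw⟩) = F w) (hinr : ∀ h, G (Sum.inr h) = 0)
    (hv : F v = 0) : ∑ u, G u = ∑ w, F w := by
  rw [Fintype.sum_sum_type, Fintype.sum_congr _ _ hinr, sum_const_zero, add_zero,
    ← sum_erase _ hv, sum_subtype (p := (· ≠ v)) (univ.erase v) (by simp)]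
  exact Fintype.sum_congr _ _ fun w => hinl w.1 w.2

variable [DecidableEq E] (f : States ends) {w : V} (hw : w ≠ v)

lemma downState_of_eq_inl {h} (hf : f w = Sum.inl h) :
    downState ends v f (Sum.inl ⟨w, hw⟩) =
      Sum.inl ⟨h.1, vtx_exEnds_eq_inl ends v hw h.2⟩ := by
  simp only [downState, hf]
  exact dif_pos (vtx_exEnds_eq_inl ends v hw h.2)

lemma downState_of_eq_inr {t : Bool} (hf : f w = Sum.inr t) :
    downState ends v f (Sum.inl ⟨w, hw⟩) = Sum.inr t := by
  simp only [downState, hf]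

lemma downState_update (t : Bool) :
    downState ends v (Function.update f w (Sum.inr t)) =
      Function.update (downState ends v f) (Sum.inl ⟨w, hw⟩) (Sum.inr t) := by
  funext u
  rcases u with ⟨u, hu⟩ | u
  · rcases eq_or_ne u w with rfl | huw
    · rw [Function.update_self, downState_of_eq_inr ends v _ hu (Function.update_self _ _ _)]
    · rw [Function.update_of_ne (by simpa using huw)]
      simp only [downState, Function.update_of_ne huw]
  · rw [Function.update_of_ne (by simp)]
    rfl

lemma isLeft_downState : (downState ends v f (Sum.inl ⟨w, hw⟩)).isLeft = (f w).isLeft := by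
  rcases hf : f w with h | t
  · rw [downState_of_eq_inl ends v f hw hf]
    rfl
  · rw [downState_of_eq_inr ends v f hw hf]
    rfl

lemma genWt_downState : genWt (downState ends v f (Sum.inl ⟨w, hw⟩)) = genWt (f w) := by
  rcases hf : f w with h | t
  · rw [downState_of_eq_inl ends v f hw hf]
    rfl
  · rw [downState_of_eq_inr ends v f hw hf]
    rfl

lemma resState_downState {f : States ends} (hf : f v = Sum.inr false) :
    resState ends v (downState ends v f) = f := by
  funext w
  rcases eq_or_ne w v with rfl | hw
  · rw [resState, dif_pos rfl, hf]
  · rw [resState, dif_neg hw]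
    rcases hfw : f w with h | t
    · rw [downState_of_eq_inl ends v f hw hfw]
      exact dif_pos h.2
    · rw [downState_of_eq_inr ends v f hw hfw]

/-- The transfer of chains of `Γ` to chains of `Γ_v`, replacing the generator at `v` by `∅` on all
the new leaves. It carries no signs, and is compatible with the differentials only in degree one,
where the Koszul signs are trivial. -/
noncomputable def explode : SC ends →ₗ[ℤ] SC (exEnds ends v) :=
  Finsupp.lmapDomain ℤ ℤ fun b => (b.1, downState ends v b.2)

lemma explode_single (m : E →₀ ℕ) (f : States ends) (a : ℤ) :
    explode ends v (Finsupp.single (m, f) a) = Finsupp.single (m, downState ends v f) a := by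
  simp [explode]

variable [Fintype E] {f} (m : E →₀ ℕ)

lemma incl_single_downState (hf : f v = Sum.inr false) :
    incl ends v (Finsupp.single (m, downState ends v f) 1) = Finsupp.single (m, f) 1 := by
  have no_leaf : ¬ leafHasHalf ends v (downState ends v f) := by
    rintro ⟨_, hh⟩
    exact Bool.false_ne_true hh
  have no_extra : extraMon ends v (downState ends v f) = 0 := sum_eq_zero fun _ _ => rfl
  rw [incl, Finsupp.linearCombination_single, one_smul, inclB, if_neg no_leaf]
  simp only [no_extra, resState_downState ends v hf, add_zero]

lemma incl_explode {x : SC ends} (hx : x ∈ vacant ends v) : incl ends v (explode ends v x) = x :=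
  map_eq_map_of_mem_supported hx (F := incl ends v ∘ₗ explode ends v) (G := LinearMap.id)
    fun b hb => by
      rw [LinearMap.comp_apply, explode_single, incl_single_downState ends v b.1 hb]
      rfl

variable [Fintype V]

lemma degB_downState (hf : f v = Sum.inr false) :
    degB (exEnds ends v) (m, downState ends v f) = degB ends (m, f) := by
  rw [degB_eq_sum, degB_eq_sum]
  exact sum_exVert ends v (fun w hw => by rw [isLeft_downState]) (fun _ => rfl) (by rw [hf]; rfl)

lemma wtB_downState (hf : f v = Sum.inr false) :
    wtB (exEnds ends v) (m, downState ends v f) = wtB ends (m, f) := by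
  rw [wtB_eq_degree_add_sum, wtB_eq_degree_add_sum]
  congr 1
  exact sum_exVert ends v (fun w hw => by rw [genWt_downState]) (fun _ => rfl) (by rw [hf]; rfl)

lemma explode_mem_hasDW {i k : ℕ} {x : SC ends} (hx : x ∈ hasDW ends i k)
    (hvx : x ∈ vacant ends v) : explode ends v x ∈ hasDW (exEnds ends v) i k := by
  have hsupp : x ∈ Finsupp.supported ℤ ℤ
      {b : Bas ends | (degB ends b = i ∧ wtB ends b = k) ∧ b.2 v = Sum.inr false} :=
    fun b hb => ⟨hx b hb, hvx hb⟩
  refine map_mem_of_mem_supported hsupp _ _ ?_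
  rintro ⟨m, f⟩ ⟨⟨hdeg, hwt⟩, hf⟩
  rw [explode_single]
  exact single_mem_hasDW _ ((degB_downState ends v m hf).trans hdeg)
    ((wtB_downState ends v m hf).trans hwt) 1

lemma D_explode_single (hf : f v = Sum.inr false) (hdeg : degB ends (m, f) = 1) :
    D (exEnds ends v) (explode ends v (Finsupp.single (m, f) 1)) =
      explode ends v (D ends (Finsupp.single (m, f) 1)) := by
  rw [D_eq_partialD_univ, D_eq_partialD_univ, explode_single, partialD, partialD,
    LinearMap.sum_apply, LinearMap.sum_apply, map_sum]
  refine sum_exVert ends v (fun w hw => ?_)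
    (fun _ => vertexD_single_of_eq_inr (exEnds ends v) m rfl)
    (by rw [vertexD_single_of_eq_inr ends m hf, map_zero])
  rcases hfw : f w with h | t
  · have hdown := downState_of_eq_inl ends v f hw hfw
    rw [vertexD_single_of_eq_inl ends m hfw, vertexD_single_of_eq_inl (exEnds ends v) m hdown,
      sgn_eq_one_of_degB_eq_one ends hdeg (by rw [hfw]; rfl),
      sgn_eq_one_of_degB_eq_one _ ((degB_downState ends v m hf).trans hdeg) (by rw [hdown]; rfl),
      one_smul, one_smul, map_sub, explode_single, explode_single, downState_update ends v f hw,
      downState_update ends v f hw]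
  · rw [vertexD_single_of_eq_inr ends m hfw, map_zero,
      vertexD_single_of_eq_inr _ m (downState_of_eq_inr ends v f hw hfw)]

lemma D_explode {k : ℕ} {x : SC ends} (hx : x ∈ hasDW ends 1 k) (hvx : x ∈ vacant ends v) :
    D (exEnds ends v) (explode ends v x) = explode ends v (D ends x) := by
  have hsupp : x ∈ Finsupp.supported ℤ ℤ
      {b : Bas ends | degB ends b = 1 ∧ b.2 v = Sum.inr false} :=
    fun b hb => ⟨(hx b hb).1, hvx hb⟩
  exact map_eq_map_of_mem_supported hsupp (F := D (exEnds ends v) ∘ₗ explode ends v)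
    (G := explode ends v ∘ₗ D ends) fun b hb => D_explode_single ends v b.1 hb.2 hb.1

lemma explode_mem_cyc {k : ℕ} {x : SC ends} (hx : x ∈ cyc ends 1 k ⊓ vacant ends v) :
    explode ends v x ∈ cyc (exEnds ends v) 1 k :=
  ⟨by rw [SetLike.mem_coe, LinearMap.mem_ker, D_explode ends v hx.1.2 hx.2, hx.1.1, map_zero],
    explode_mem_hasDW ends v hx.1.2 hx.2⟩

end Explosion

section Separation

variable {V E : Type} [DecidableEq V] (ends : E → V × V) (v : V)

/-- The adjacency relation of the vertices of `Γ_v`. -/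
def ExAdj (a b : ExVert ends v) : Prop :=
  ∃ e : E, exEnds ends v e = (a, b) ∨ exEnds ends v e = (b, a)

variable {ends v}

lemma reflTransGen_exAdj_vtx_iff (a : ExVert ends v) (h : E × Bool) :
    Relation.ReflTransGen (ExAdj ends v) a (vtx (exEnds ends v) h) ↔
      Relation.ReflTransGen (ExAdj ends v) a (exEnds ends v h.1).1 := by
  rcases h with ⟨e, _ | _⟩
  · rfl
  · exact ⟨fun hr => hr.tail ⟨e, Or.inr rfl⟩, fun hr => hr.tail ⟨e, Or.inl rfl⟩⟩

lemma exists_locallyConstOn_of_not_reflTransGen [Fintype V] {e₁ e₂ : E}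
    (hsep : ¬ Relation.ReflTransGen (ExAdj ends v) (exEnds ends v e₁).1 (exEnds ends v e₂).1) :
    ∃ (c : E → ℤ) (d : V → ℤ), LocallyConstOn ends c d (univ.erase v) ∧ c e₁ - c e₂ = 1 := by
  classical
  let InComponent (u : ExVert ends v) : Prop :=
    Relation.ReflTransGen (ExAdj ends v) (exEnds ends v e₁).1 u
  refine ⟨fun e => if InComponent (exEnds ends v e).1 then 1 else 0,
    fun u => if hu : u = v then 0 else if InComponent (Sum.inl ⟨u, hu⟩) then 1 else 0,
    fun h hh => ?_, ?_⟩
  · have hv : vtx ends h ≠ v := ne_of_mem_erase hh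
    simp only [dif_neg hv, ← vtx_exEnds_eq_inl ends v hv rfl, InComponent,
      reflTransGen_exAdj_vtx_iff]
  · simp [InComponent, hsep, Relation.ReflTransGen.refl]

end Separation

end Swiatkowski

/-- **torsion criterion at a 1-cut.**
Let `v` be a vertex of a graph `Γ` and `e₁`, `e₂` edges lying in distinct
connected components of the vertex explosion `Γ_v`.  Then the
`(e₁ − e₂)`-torsion submodule of `H₁(B(Γ))` is contained in the image of
`H₁(B(Γ_v)) → H₁(B(Γ))`.  Stated at the chain level of the Świątkowski
complexes: any degree-1, weight-`k` cycle `x` of `Γ` with `(e₁ − e₂)·x` a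
boundary agrees, modulo boundaries, with the image of a cycle of `Γ_v` under
the chain map induced by the inclusion `Γ_v ⊆ Γ`. -/
theorem torsion_in_image_of_explosion
    {V E : Type} [Fintype V] [Fintype E] [DecidableEq V] [DecidableEq E]
    (ends : E → V × V) (v : V) (e₁ e₂ : E)
    (hsep : ¬ Relation.ReflTransGen
      (fun a b : ExVert ends v => ∃ e : E,
        exEnds ends v e = (a, b) ∨ exEnds ends v e = (b, a))
      (exEnds ends v e₁).1 (exEnds ends v e₂).1) :
    ∀ k : ℕ, ∀ x ∈ cyc ends 1 k,
      (stab ends e₁ - stab ends e₂) x ∈ bdry ends 1 (k + 1) →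
      ∃ y ∈ cyc (exEnds ends v) 1 k, ∃ z ∈ hasDW ends 2 k,
        x = incl ends v y + D ends z := by
  intro k x hx hex
  obtain ⟨c, d, hcd, hc⟩ := exists_locallyConstOn_of_not_reflTransGen hsep
  obtain ⟨x', hx', z, hz, hxz⟩ := exists_vacant_homologous hcd hc hx hex
  exact ⟨explode ends v x', explode_mem_cyc ends v hx', z, hz,
    by rw [incl_explode ends v hx'.2, hxz]⟩
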